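/- If p ∈ 𝕀 is a nonzero 𝕀-primitive icosian, then pLp̃ = {p x p̃ : x ∈ L} is an L-primitive sublattice of L, i.e., for every rational number α with α·(pLp̃) ⊆ L one has α ∈ ℤ. -/

import Mathlib

/-!
The twist is an anti-automorphism of `𝕀` that is semilinear over the Galois conjugation of `K`
(`twist_mul`, `twist_smul`, `ico_twist`), and `L` is its set of fixed points in `𝕀`
(`twist_of_mem_L`, `mem_L_of_twist`). Hence `p x p̃` lies in `𝕀` and is fixed by the twist for every
`x ∈ L`, which gives `p L p̃ ⊆ L`.

For primitivity, let `α ∈ ℚ` satisfy `α p L p̃ ⊆ L`. The `𝔬`-span of `L` contains `√5 𝕀`, so with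
`β = √5 α` one has `β p x p̃ ∈ 𝕀` for all `x ∈ 𝕀`. The reduced trace form `(x, y) ↦ tr (x ȳ)` is
unimodular on `𝕀`: the basis `vᵢ` has a dual basis whose conjugates `uᵢ` again lie in `𝕀`, and it
satisfies the Casimir identity `∑ᵢ vᵢ x uᵢ = tr x` (`casimir`). Therefore
`β tr (p u_k) p̃ = ∑ᵢ vᵢ (β p (u_k uᵢ) p̃)` lies in `𝕀`. After a twist, primitivity of `p` yields
`β tr (p u_k) ∈ 𝔬`. But `tr (p u_k)` is the `k`-th coordinate of `p` in the basis `vᵢ`, so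
`β p ∈ 𝕀`, and a second use of primitivity gives `√5 α = β ∈ 𝔬`, which forces `α ∈ ℤ`.
-/


noncomputable section

open Quaternion

/-- Hamilton's quaternion algebra over `ℝ`. -/
abbrev HR := Quaternion ℝ

/-- the golden ratio `τ = (1+√5)/2`. -/
def tau : ℝ := (1 + Real.sqrt 5) / 2

/-- membership in the quadratic field `K = ℚ(√5)`, viewed inside `ℝ`. -/
def inK (x : ℝ) : Prop := ∃ q r : ℚ, x = (q : ℝ) + (r : ℝ) * Real.sqrt 5

/-- membership in the ring of integers `𝔬 = ℤ[τ]` of `K`, viewed inside `ℝ`. -/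
def inO (x : ℝ) : Prop := ∃ m n : ℤ, x = (m : ℝ) + (n : ℝ) * tau

/-- membership in `ℍ(K)`: all four components lie in `K`. -/
def inHK (q : HR) : Prop := inK q.re ∧ inK q.imI ∧ inK q.imJ ∧ inK q.imK

open scoped Classical in
/-- Galois conjugation `′` on `K = ℚ(√5)`, sending `q + r√5` to `q - r√5`
(extended by the identity off `K`; on `K` this is the usual Galois conjugation,
since the representation `x = q + r√5` with `q, r ∈ ℚ` is unique). -/
noncomputable def gal (x : ℝ) : ℝ :=
  if h : ∃ q r : ℚ, x = (q : ℝ) + (r : ℝ) * Real.sqrt 5 then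
    ((h.choose : ℝ) - (h.choose_spec.choose : ℝ) * Real.sqrt 5)
  else x

/-- the twist map `q = (a,b,c,d) ↦ q̃ = (a′,b′,d′,c′)` on `ℍ(K)`. -/
def twist (q : HR) : HR := ⟨gal q.re, gal q.imI, gal q.imK, gal q.imJ⟩

def v₁ : HR := ⟨1, 0, 0, 0⟩
def v₂ : HR := ⟨0, 1, 0, 0⟩
def v₃ : HR := ⟨1/2, 1/2, 1/2, 1/2⟩
def v₄ : HR := ⟨(1 - tau)/2, tau/2, 0, 1/2⟩

/-- membership in the icosian ring `𝕀`: the `𝔬`-span of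
`(1,0,0,0)`, `(0,1,0,0)`, `½(1,1,1,1)`, `½(1−τ,τ,0,1)`. -/
def inIcosian (q : HR) : Prop :=
  ∃ a b c d : ℝ, inO a ∧ inO b ∧ inO c ∧ inO d ∧
    q = a • v₁ + b • v₂ + c • v₃ + d • v₄

def w₁ : HR := ⟨1, 0, 0, 0⟩
def w₂ : HR := ⟨-(1/2), 1/2, 1/2, 1/2⟩
def w₃ : HR := ⟨0, -1, 0, 0⟩
def w₄ : HR := ⟨0, 1/2, (tau - 1)/2, -(tau/2)⟩

/-- the lattice `L` (a copy of the root lattice `A₄`): the `ℤ`-span of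
`(1,0,0,0)`, `½(−1,1,1,1)`, `(0,−1,0,0)`, `½(0,1,τ−1,−τ)`. -/
def Lsub : AddSubgroup HR :=
  (Submodule.span ℤ ({w₁, w₂, w₃, w₄} : Set HR)).toAddSubgroup

/-- `Λ` is a similar sublattice (SSL) of `L`: `Λ = α R(L) ⊆ L` for some
`α > 0` and a linear isometry `R` of `ℍ ≅ ℝ⁴`. -/
def IsSSL (Λ : AddSubgroup HR) : Prop :=
  ∃ (α : ℝ) (R : HR ≃ₗᵢ[ℝ] HR), 0 < α ∧
    (Λ : Set HR) = (fun x => α • R x) '' (Lsub : Set HR) ∧ Λ ≤ Lsub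

/-- `p` is an `𝕀`-primitive icosian: `p ∈ 𝕀` and whenever `α ∈ K` with
`α p ∈ 𝕀`, one has `α ∈ 𝔬`. -/
def IPrimitive (p : HR) : Prop :=
  inIcosian p ∧ ∀ α : ℝ, inK α → inIcosian (α • p) → inO α

/-- an icosian `q` is admissible when `|q q̃|` is a rational integer. -/
def Admissible (q : HR) : Prop := ∃ n : ℤ, ‖q * twist q‖ = (n : ℝ)

lemma inO_add {x y : ℝ} (hx : inO x) (hy : inO y) : inO (x + y) := by
  obtain ⟨m, n, rfl⟩ := hx; obtain ⟨m', n', rfl⟩ := hy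
  exact ⟨m + m', n + n', by push_cast; ring⟩

lemma inO_neg {x : ℝ} (hx : inO x) : inO (-x) := by
  obtain ⟨m, n, rfl⟩ := hx
  exact ⟨-m, -n, by push_cast; ring⟩

/-- the icosian ring `𝕀` as an additive subgroup of `ℍ`. -/
def Isub : AddSubgroup HR where
  carrier := {q | inIcosian q}
  zero_mem' := ⟨0, 0, 0, 0, ⟨0, 0, by push_cast; ring⟩, ⟨0, 0, by push_cast; ring⟩,
    ⟨0, 0, by push_cast; ring⟩, ⟨0, 0, by push_cast; ring⟩, by simp⟩
  add_mem' := by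
    rintro x y ⟨a, b, c, d, ha, hb, hc, hd, rfl⟩ ⟨a', b', c', d', ha', hb', hc', hd', rfl⟩
    exact ⟨a + a', b + b', c + c', d + d', inO_add ha ha', inO_add hb hb',
      inO_add hc hc', inO_add hd hd', by simp [add_smul]; abel⟩
  neg_mem' := by
    rintro x ⟨a, b, c, d, ha, hb, hc, hd, rfl⟩
    exact ⟨-a, -b, -c, -d, inO_neg ha, inO_neg hb, inO_neg hc, inO_neg hd,
      by simp [neg_smul]; abel⟩

/-- the additive map `x ↦ p x p̃`. -/
def conjHom (p : HR) : HR →+ HR :=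
  AddMonoidHom.mk' (fun x => p * x * twist p) (fun a b => by simp [mul_add, add_mul])

/-- the additive map `x ↦ (1/|q q̃|) · q x q̃`. -/
def cslHom (q : HR) : HR →+ HR :=
  AddMonoidHom.mk' (fun x => (1 / ‖q * twist q‖) • (q * x * twist q))
    (fun a b => by simp [mul_add, add_mul, smul_add])

/-- the subgroup `L ∩ (1/|q q̃|) · q L q̃` of `ℍ`. -/
def cslSub (q : HR) : AddSubgroup HR := Lsub ⊓ Lsub.map (cslHom q)

/-- for a rotation `R`, the subgroup `Γ ∩ R(Γ)`. -/
def cslOf (Γ : AddSubgroup HR) (R : HR ≃ₗᵢ[ℝ] HR) : AddSubgroup HR :=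
  Γ ⊓ Γ.map R.toLinearEquiv.toLinearMap.toAddMonoidHom

/-- the standard Euclidean inner product on `ℍ ≅ ℝ⁴`. -/
def dot (x y : HR) : ℝ := x.re * y.re + x.imI * y.imI + x.imJ * y.imJ + x.imK * y.imK

/-- the dual lattice `L* = {x ∈ ℍ : ⟨x|y⟩ ∈ ℤ for all y ∈ L}`. -/
def Ldual : AddSubgroup HR where
  carrier := {x | ∀ y ∈ Lsub, ∃ n : ℤ, dot x y = n}
  zero_mem' := by intro y _; exact ⟨0, by simp [dot]⟩
  add_mem' := by
    intro a b ha hb y hy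
    obtain ⟨m, hm⟩ := ha y hy; obtain ⟨n, hn⟩ := hb y hy
    refine ⟨m + n, ?_⟩
    have : dot (a + b) y = dot a y + dot b y := by simp [dot]; ring
    rw [this, hm, hn]; push_cast; ring
  neg_mem' := by
    intro a ha y hy
    obtain ⟨m, hm⟩ := ha y hy
    refine ⟨-m, ?_⟩
    have : dot (-a) y = -dot a y := by simp [dot]; ring
    rw [this, hm]; push_cast; ring

/-! ### Arithmetic of `𝔬` and `K` -/

lemma sqrt5_sq : Real.sqrt 5 * Real.sqrt 5 = 5 := Real.mul_self_sqrt (by norm_num)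

lemma tau_sq : tau * tau = tau + 1 := by
  have := sqrt5_sq
  unfold tau
  linear_combination this / 4

lemma inO_mul {x y : ℝ} (hx : inO x) (hy : inO y) : inO (x * y) := by
  obtain ⟨m, n, rfl⟩ := hx; obtain ⟨m', n', rfl⟩ := hy
  refine ⟨m * m' + n * n', m * n' + n * m' + n * n', ?_⟩
  push_cast
  linear_combination (n : ℝ) * n' * tau_sq

/-- Uniqueness of the representation `q + r√5` with `q, r ∈ ℚ`. -/
lemma rep_unique {q r q' r' : ℚ}
    (h : (q : ℝ) + r * Real.sqrt 5 = q' + r' * Real.sqrt 5) : q = q' ∧ r = r' := by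
  have irr : Irrational (Real.sqrt 5) := by
    have := Nat.Prime.irrational_sqrt (p := 5) (by norm_num)
    exact_mod_cast this
  have hr : r = r' := by
    by_contra hne
    have hne' : (r : ℝ) - r' ≠ 0 := sub_ne_zero.mpr (by exact_mod_cast hne)
    apply irr
    refine ⟨(q' - q) / (r - r'), ?_⟩
    push_cast
    rw [div_eq_iff hne']
    linear_combination -h
  subst hr
  refine ⟨?_, rfl⟩
  have : (q : ℝ) = q' := by linarith
  exact_mod_cast this

lemma gal_rep (q r : ℚ) : gal ((q : ℝ) + r * Real.sqrt 5) = q - r * Real.sqrt 5 := by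
  have h : ∃ a b : ℚ, (q : ℝ) + r * Real.sqrt 5 = (a : ℝ) + (b : ℝ) * Real.sqrt 5 := ⟨q, r, rfl⟩
  unfold gal
  rw [dif_pos h]
  obtain ⟨h1, h2⟩ := rep_unique h.choose_spec.choose_spec
  exact congrArg₂ (fun a b : ℚ => (a : ℝ) - b * Real.sqrt 5) h1.symm h2.symm

lemma gal_eq {x : ℝ} (q r : ℚ) (h : x = q + r * Real.sqrt 5) : gal x = q - r * Real.sqrt 5 := by
  rw [h, gal_rep]

lemma gal_rat (q : ℚ) : gal q = q := by
  rw [gal_eq q 0 (by simp)]; simp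

lemma gal_tau : gal tau = 1 - tau := by
  rw [gal_eq (1/2) (1/2) (by unfold tau; push_cast; ring)]; unfold tau; push_cast; ring

lemma inK_rat (q : ℚ) : inK q := ⟨q, 0, by simp⟩

lemma inK_tau : inK tau := ⟨1/2, 1/2, by unfold tau; push_cast; ring⟩

lemma inK_sqrt : inK (Real.sqrt 5) := ⟨0, 1, by simp⟩

lemma inK_add {x y : ℝ} (hx : inK x) (hy : inK y) : inK (x + y) := by
  obtain ⟨q, r, rfl⟩ := hx; obtain ⟨q', r', rfl⟩ := hy
  exact ⟨q + q', r + r', by push_cast; ring⟩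

lemma inK_neg {x : ℝ} (hx : inK x) : inK (-x) := by
  obtain ⟨q, r, rfl⟩ := hx
  exact ⟨-q, -r, by push_cast; ring⟩

lemma inK_sub {x y : ℝ} (hx : inK x) (hy : inK y) : inK (x - y) := by
  rw [sub_eq_add_neg]; exact inK_add hx (inK_neg hy)

lemma inK_mul {x y : ℝ} (hx : inK x) (hy : inK y) : inK (x * y) := by
  obtain ⟨q, r, rfl⟩ := hx; obtain ⟨q', r', rfl⟩ := hy
  refine ⟨q * q' + 5 * r * r', q * r' + r * q', ?_⟩
  push_cast
  linear_combination (r : ℝ) * r' * sqrt5_sq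

lemma gal_add {x y : ℝ} (hx : inK x) (hy : inK y) : gal (x + y) = gal x + gal y := by
  obtain ⟨q, r, rfl⟩ := hx; obtain ⟨q', r', rfl⟩ := hy
  rw [gal_rep, gal_rep, gal_eq (q + q') (r + r') (by push_cast; ring)]
  push_cast; ring

lemma gal_neg {x : ℝ} (hx : inK x) : gal (-x) = -gal x := by
  obtain ⟨q, r, rfl⟩ := hx
  rw [gal_rep, gal_eq (-q) (-r) (by push_cast; ring)]
  push_cast; ring

lemma gal_sub {x y : ℝ} (hx : inK x) (hy : inK y) : gal (x - y) = gal x - gal y := by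
  rw [sub_eq_add_neg, gal_add hx (inK_neg hy), gal_neg hy, sub_eq_add_neg]

lemma gal_mul {x y : ℝ} (hx : inK x) (hy : inK y) : gal (x * y) = gal x * gal y := by
  obtain ⟨q, r, rfl⟩ := hx; obtain ⟨q', r', rfl⟩ := hy
  rw [gal_rep, gal_rep, gal_eq (q * q' + 5 * r * r') (q * r' + r * q')
    (by push_cast; linear_combination (r : ℝ) * r' * sqrt5_sq)]
  push_cast
  linear_combination -(r : ℝ) * r' * sqrt5_sq

lemma inK_gal {x : ℝ} (hx : inK x) : inK (gal x) := by
  obtain ⟨q, r, rfl⟩ := hx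
  rw [gal_rep]; exact ⟨q, -r, by push_cast; ring⟩

lemma gal_gal {x : ℝ} (hx : inK x) : gal (gal x) = x := by
  obtain ⟨q, r, rfl⟩ := hx
  rw [gal_rep, gal_eq q (-r) (by push_cast; ring)]; push_cast; ring

lemma inO_int (m : ℤ) : inO m := ⟨m, 0, by simp⟩

lemma inO_tau : inO tau := ⟨0, 1, by simp⟩

lemma inK_of_inO {x : ℝ} (hx : inO x) : inK x := by
  obtain ⟨m, n, rfl⟩ := hx
  exact ⟨m + n / 2, n / 2, by unfold tau; push_cast; ring⟩

lemma gal_tau_rep (q r : ℚ) : gal ((q : ℝ) + r * tau) = q + r * (1 - tau) := by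
  rw [gal_eq (q + r / 2) (r / 2) (by unfold tau; push_cast; ring)]
  unfold tau; push_cast; ring

lemma inO_gal {x : ℝ} (hx : inO x) : inO (gal x) := by
  obtain ⟨m, n, rfl⟩ := hx
  have := gal_tau_rep m n
  push_cast at this
  rw [this]
  exact ⟨m + n, -n, by push_cast; ring⟩

lemma tau_rep_unique {q r q' r' : ℚ} (h : (q : ℝ) + r * tau = q' + r' * tau) :
    q = q' ∧ r = r' := by
  have h' : ((q + r / 2 : ℚ) : ℝ) + ((r / 2 : ℚ) : ℝ) * Real.sqrt 5
      = ((q' + r' / 2 : ℚ) : ℝ) + ((r' / 2 : ℚ) : ℝ) * Real.sqrt 5 := by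
    unfold tau at h
    push_cast
    linear_combination h
  obtain ⟨h1, h2⟩ := rep_unique h'
  constructor <;> linarith

/-! ### Components of the quaternions involved

A literal `⟨a, b, c, d⟩ : HR` is a `QuaternionAlgebra` term, on which the `Quaternion` component
lemmas do not fire; the components are therefore recorded for the named vectors. -/

@[simp] lemma v₁_comp : v₁.re = 1 ∧ v₁.imI = 0 ∧ v₁.imJ = 0 ∧ v₁.imK = 0 :=
  ⟨rfl, rfl, rfl, rfl⟩

@[simp] lemma v₂_comp : v₂.re = 0 ∧ v₂.imI = 1 ∧ v₂.imJ = 0 ∧ v₂.imK = 0 :=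
  ⟨rfl, rfl, rfl, rfl⟩

@[simp] lemma v₃_comp : v₃.re = 1 / 2 ∧ v₃.imI = 1 / 2 ∧ v₃.imJ = 1 / 2 ∧ v₃.imK = 1 / 2 :=
  ⟨rfl, rfl, rfl, rfl⟩

@[simp] lemma v₄_comp : v₄.re = (1 - tau) / 2 ∧ v₄.imI = tau / 2
    ∧ v₄.imJ = 0 ∧ v₄.imK = 1 / 2 :=
  ⟨rfl, rfl, rfl, rfl⟩

@[simp] lemma w₁_comp : w₁.re = 1 ∧ w₁.imI = 0 ∧ w₁.imJ = 0 ∧ w₁.imK = 0 :=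
  ⟨rfl, rfl, rfl, rfl⟩

@[simp] lemma w₂_comp : w₂.re = -(1 / 2) ∧ w₂.imI = 1 / 2 ∧ w₂.imJ = 1 / 2 ∧ w₂.imK = 1 / 2 :=
  ⟨rfl, rfl, rfl, rfl⟩

@[simp] lemma w₃_comp : w₃.re = 0 ∧ w₃.imI = -1 ∧ w₃.imJ = 0 ∧ w₃.imK = 0 :=
  ⟨rfl, rfl, rfl, rfl⟩

@[simp] lemma w₄_comp : w₄.re = 0 ∧ w₄.imI = 1 / 2
    ∧ w₄.imJ = (tau - 1) / 2 ∧ w₄.imK = -(tau / 2) :=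
  ⟨rfl, rfl, rfl, rfl⟩

@[simp] lemma twist_comp (x : HR) : (twist x).re = gal x.re ∧ (twist x).imI = gal x.imI ∧
    (twist x).imJ = gal x.imK ∧ (twist x).imK = gal x.imJ :=
  ⟨rfl, rfl, rfl, rfl⟩

/-! ### The twist on `ℍ(K)` -/

lemma inHK_smul {a : ℝ} {x : HR} (ha : inK a) (hx : inHK x) : inHK (a • x) := by
  obtain ⟨h1, h2, h3, h4⟩ := hx
  refine ⟨?_, ?_, ?_, ?_⟩ <;> simp <;> apply inK_mul <;> assumption

lemma inHK_add {x y : HR} (hx : inHK x) (hy : inHK y) : inHK (x + y) := by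
  obtain ⟨h1, h2, h3, h4⟩ := hx
  obtain ⟨k1, k2, k3, k4⟩ := hy
  refine ⟨?_, ?_, ?_, ?_⟩ <;> simp <;> apply inK_add <;> assumption

lemma inHK_mul {x y : HR} (hx : inHK x) (hy : inHK y) : inHK (x * y) := by
  obtain ⟨h1, h2, h3, h4⟩ := hx
  obtain ⟨k1, k2, k3, k4⟩ := hy
  refine ⟨?_, ?_, ?_, ?_⟩ <;> simp only [Quaternion.re_mul, Quaternion.imI_mul,
    Quaternion.imJ_mul, Quaternion.imK_mul] <;>
  simp (maxDischargeDepth := 10) only [inK_add, inK_sub, inK_mul, *]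

lemma twist_add {x y : HR} (hx : inHK x) (hy : inHK y) : twist (x + y) = twist x + twist y := by
  obtain ⟨h1, h2, h3, h4⟩ := hx
  obtain ⟨k1, k2, k3, k4⟩ := hy
  ext <;> simp [gal_add, *]

lemma twist_smul {a : ℝ} {x : HR} (ha : inK a) (hx : inHK x) :
    twist (a • x) = gal a • twist x := by
  obtain ⟨h1, h2, h3, h4⟩ := hx
  ext <;> simp [gal_mul, *]

/-- Exchanging the components along `j` and `k` reverses products, so the twist is an
anti-homomorphism. -/
lemma twist_mul {x y : HR} (hx : inHK x) (hy : inHK y) : twist (x * y) = twist y * twist x := by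
  obtain ⟨h1, h2, h3, h4⟩ := hx
  obtain ⟨k1, k2, k3, k4⟩ := hy
  ext <;> simp only [twist_comp, Quaternion.re_mul, Quaternion.imI_mul,
    Quaternion.imJ_mul, Quaternion.imK_mul] <;>
  simp (maxDischargeDepth := 10) only [gal_add, gal_sub, gal_mul, inK_add, inK_sub,
    inK_mul, *] <;>
  ring

lemma twist_twist {x : HR} (hx : inHK x) : twist (twist x) = x := by
  obtain ⟨h1, h2, h3, h4⟩ := hx
  ext <;> simp [gal_gal, *]

lemma inHK_twist {x : HR} (hx : inHK x) : inHK (twist x) := by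
  obtain ⟨h1, h2, h3, h4⟩ := hx
  exact ⟨inK_gal h1, inK_gal h2, inK_gal h4, inK_gal h3⟩

/-! ### The icosian ring -/

lemma ico_add {x y : HR} (hx : inIcosian x) (hy : inIcosian y) : inIcosian (x + y) :=
  Isub.add_mem hx hy

lemma ico_neg {x : HR} (hx : inIcosian x) : inIcosian (-x) :=
  Isub.neg_mem hx

lemma ico_smul {a : ℝ} {x : HR} (ha : inO a) (hx : inIcosian x) : inIcosian (a • x) := by
  obtain ⟨b, c, d, e, hb, hc, hd, he, rfl⟩ := hx
  exact ⟨a * b, a * c, a * d, a * e, inO_mul ha hb, inO_mul ha hc, inO_mul ha hd, inO_mul ha he,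
    by simp only [smul_add, smul_smul]⟩

/-- Membership in `𝕀` from explicit coordinates `mᵢ + nᵢτ`, checked on the four components. -/
lemma ico_of (m₁ n₁ m₂ n₂ m₃ n₃ m₄ n₄ : ℤ) {x : HR}
    (h1 : x.re = (m₁ + n₁ * tau) + (m₃ + n₃ * tau) / 2 + (m₄ + n₄ * tau) * (1 - tau) / 2)
    (h2 : x.imI = (m₂ + n₂ * tau) + (m₃ + n₃ * tau) / 2 + (m₄ + n₄ * tau) * tau / 2)
    (h3 : x.imJ = (m₃ + n₃ * tau) / 2)
    (h4 : x.imK = (m₃ + n₃ * tau) / 2 + (m₄ + n₄ * tau) / 2) : inIcosian x := by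
  refine ⟨_, _, _, _, ⟨m₁, n₁, rfl⟩, ⟨m₂, n₂, rfl⟩, ⟨m₃, n₃, rfl⟩, ⟨m₄, n₄, rfl⟩, ?_⟩
  ext <;> simp [h1, h2, h3, h4] <;> ring

lemma ico_v₁ : inIcosian v₁ := by
  apply ico_of 1 0 0 0 0 0 0 0 <;> simp

lemma ico_v₂ : inIcosian v₂ := by
  apply ico_of 0 0 1 0 0 0 0 0 <;> simp

lemma ico_v₃ : inIcosian v₃ := by
  apply ico_of 0 0 0 0 1 0 0 0 <;> simp

lemma ico_v₄ : inIcosian v₄ := by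
  apply ico_of 0 0 0 0 0 0 1 0 <;> simp

lemma v₁_eq : v₁ = 1 := by
  ext <;> simp

/-- A left factor may be replaced by the four basis vectors. -/
lemma ico_mul_of_basis {y : HR} (hy : inIcosian y) (h2 : inIcosian (v₂ * y))
    (h3 : inIcosian (v₃ * y)) (h4 : inIcosian (v₄ * y)) {x : HR} (hx : inIcosian x) :
    inIcosian (x * y) := by
  obtain ⟨a, b, c, d, ha, hb, hc, hd, rfl⟩ := hx
  simp only [add_mul, smul_mul_assoc, v₁_eq, one_mul]
  exact ico_add (ico_add (ico_add (ico_smul ha hy) (ico_smul hb h2)) (ico_smul hc h3))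
    (ico_smul hd h4)

lemma ico_mul_v₂ {x : HR} (hx : inIcosian x) : inIcosian (x * v₂) := by
  apply ico_mul_of_basis ico_v₂ _ _ _ hx
  · apply ico_of (-1) 0 0 0 0 0 0 0 <;> simp
  · apply ico_of 0 (-1) 0 1 1 0 (-2) 0 <;> simp <;> linarith [tau_sq]
  · apply ico_of 0 (-1) 0 0 1 0 (-1) 0 <;> simp <;> linarith [tau_sq]

lemma ico_mul_v₃ {x : HR} (hx : inIcosian x) : inIcosian (x * v₃) := by
  apply ico_mul_of_basis ico_v₃ _ _ _ hx
  · apply ico_of (-1) 1 1 (-1) (-1) 0 2 0 <;> simp <;> linarith [tau_sq]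
  · apply ico_of (-1) 0 0 0 1 0 0 0 <;> simp <;> norm_num
  · apply ico_of 0 0 (-1) 0 1 (-1) 0 1 <;> simp <;> linarith [tau_sq]

lemma ico_mul_v₄ {x : HR} (hx : inIcosian x) : inIcosian (x * v₄) := by
  apply ico_mul_of_basis ico_v₄ _ _ _ hx
  · apply ico_of 0 0 1 (-1) (-1) 0 1 0 <;> simp <;> linarith [tau_sq]
  · apply ico_of (-1) 0 1 0 0 0 1 (-1) <;> simp <;> linarith [tau_sq]
  · apply ico_of (-1) 0 0 0 0 0 1 (-1) <;> simp <;> linarith [tau_sq]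

lemma ico_mul {x y : HR} (hx : inIcosian x) (hy : inIcosian y) : inIcosian (x * y) := by
  obtain ⟨a, b, c, d, ha, hb, hc, hd, rfl⟩ := hy
  simp only [mul_add, mul_smul_comm, v₁_eq, mul_one]
  exact ico_add (ico_add (ico_add (ico_smul ha hx) (ico_smul hb (ico_mul_v₂ hx)))
    (ico_smul hc (ico_mul_v₃ hx))) (ico_smul hd (ico_mul_v₄ hx))

lemma inK_half : inK (1 / 2) := by simpa using inK_rat (1 / 2)

lemma gal_half : gal (1 / 2) = 1 / 2 := by simpa using gal_rat (1 / 2)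

lemma inK_zero : inK 0 := by simpa using inK_rat 0

lemma gal_zero : gal 0 = 0 := by simpa using gal_rat 0

lemma inK_one : inK 1 := by simpa using inK_rat 1

lemma gal_one : gal 1 = 1 := by simpa using gal_rat 1

lemma inHK_v₁ : inHK v₁ := ⟨inK_one, inK_zero, inK_zero, inK_zero⟩

lemma inHK_v₂ : inHK v₂ := ⟨inK_zero, inK_one, inK_zero, inK_zero⟩

lemma inHK_v₃ : inHK v₃ := ⟨inK_half, inK_half, inK_half, inK_half⟩

lemma inK_tau_half : inK (tau / 2) := by
  have := inK_mul inK_tau inK_half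
  rwa [mul_one_div] at this

lemma inK_one_sub_tau_half : inK ((1 - tau) / 2) := by
  have := inK_mul (inK_sub inK_one inK_tau) inK_half
  rwa [mul_one_div] at this

lemma gal_tau_half : gal (tau / 2) = (1 - tau) / 2 := by
  rw [← mul_one_div, gal_mul inK_tau inK_half, gal_tau, gal_half, mul_one_div]

lemma gal_one_sub_tau_half : gal ((1 - tau) / 2) = tau / 2 := by
  rw [← gal_tau_half, gal_gal inK_tau_half]

lemma inHK_v₄ : inHK v₄ := ⟨inK_one_sub_tau_half, inK_tau_half, inK_zero, inK_half⟩

lemma twist_v₁ : twist v₁ = v₁ := by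
  ext <;> simp only [twist_comp, v₁_comp, gal_one, gal_zero]

lemma twist_v₂ : twist v₂ = v₂ := by
  ext <;> simp only [twist_comp, v₂_comp, gal_one, gal_zero]

lemma twist_v₃ : twist v₃ = v₃ := by
  ext <;> simp only [twist_comp, v₃_comp, gal_half]

lemma ico_twist_v₄ : inIcosian (twist v₄) := by
  apply ico_of 0 0 0 0 1 0 (-1) 0 <;>
    simp only [twist_comp, v₄_comp, gal_half, gal_zero, gal_tau_half, gal_one_sub_tau_half] <;>
    push_cast <;> ring

lemma inHK_of_ico {x : HR} (hx : inIcosian x) : inHK x := by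
  obtain ⟨a, b, c, d, ha, hb, hc, hd, rfl⟩ := hx
  exact inHK_add (inHK_add (inHK_add (inHK_smul (inK_of_inO ha) inHK_v₁)
    (inHK_smul (inK_of_inO hb) inHK_v₂)) (inHK_smul (inK_of_inO hc) inHK_v₃))
    (inHK_smul (inK_of_inO hd) inHK_v₄)

lemma ico_twist {x : HR} (hx : inIcosian x) : inIcosian (twist x) := by
  obtain ⟨a, b, c, d, ha, hb, hc, hd, rfl⟩ := hx
  have h1 := inHK_smul (inK_of_inO ha) inHK_v₁
  have h2 := inHK_smul (inK_of_inO hb) inHK_v₂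
  have h3 := inHK_smul (inK_of_inO hc) inHK_v₃
  have h4 := inHK_smul (inK_of_inO hd) inHK_v₄
  rw [twist_add (inHK_add (inHK_add h1 h2) h3) h4, twist_add (inHK_add h1 h2) h3,
    twist_add h1 h2, twist_smul (inK_of_inO ha) inHK_v₁, twist_smul (inK_of_inO hb) inHK_v₂,
    twist_smul (inK_of_inO hc) inHK_v₃, twist_smul (inK_of_inO hd) inHK_v₄,
    twist_v₁, twist_v₂, twist_v₃]
  exact ico_add (ico_add (ico_add (ico_smul (inO_gal ha) ico_v₁) (ico_smul (inO_gal hb) ico_v₂))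
    (ico_smul (inO_gal hc) ico_v₃)) (ico_smul (inO_gal hd) ico_twist_v₄)

/-! ### `L` as the fixed points of the twist in `𝕀` -/

lemma mem_L_iff {x : HR} :
    x ∈ Lsub ↔ ∃ a b c d : ℤ, x = a • w₁ + b • w₂ + c • w₃ + d • w₄ := by
  unfold Lsub
  rw [Submodule.mem_toAddSubgroup]
  simp only [Submodule.mem_span_insert, Submodule.mem_span_singleton]
  constructor
  · rintro ⟨a, _, ⟨b, _, ⟨c, _, ⟨d, rfl⟩, rfl⟩, rfl⟩, rfl⟩
    exact ⟨a, b, c, d, by abel⟩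
  · rintro ⟨a, b, c, d, rfl⟩
    exact ⟨a, _, ⟨b, _, ⟨c, _, ⟨d, rfl⟩, rfl⟩, rfl⟩, by abel⟩

/-- The expression of a point of `L` in the `𝔬`-basis of `𝕀`. -/
lemma L_coords (a b c d : ℤ) : (a • w₁ + b • w₂ + c • w₃ + d • w₄ : HR) =
    ((a - b - d : ℤ) : ℝ) • v₁ + ((-c + 2 * d : ℤ) : ℝ) • v₂ +
    (((b - d : ℤ) : ℝ) + (d : ℤ) * tau) • v₃ + ((d : ℝ) + ((-2 * d : ℤ) : ℝ) * tau) • v₄ := by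
  have h := tau_sq
  simp only [← Int.cast_smul_eq_zsmul ℝ]
  ext <;> simp
  · linear_combination -(d : ℝ) * h
  · linear_combination (d : ℝ) * h
  · ring
  · ring

lemma ico_of_mem_L {x : HR} (hx : x ∈ Lsub) : inIcosian x := by
  obtain ⟨a, b, c, d, rfl⟩ := mem_L_iff.mp hx
  rw [L_coords]
  exact ⟨_, _, _, _, inO_int _, inO_int _, ⟨_, _, rfl⟩, ⟨d, -2 * d, rfl⟩, rfl⟩

lemma twist_of_mem_L {x : HR} (hx : x ∈ Lsub) : twist x = x := by
  obtain ⟨a, b, c, d, rfl⟩ := mem_L_iff.mp hx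
  simp only [← Int.cast_smul_eq_zsmul ℝ]
  ext <;> simp
  · rw [gal_eq (a - b / 2) 0 (by push_cast; ring)]; push_cast; ring
  · rw [gal_eq (b / 2 - c + d / 2) 0 (by push_cast; ring)]; push_cast; ring
  · rw [gal_eq (b / 2 - d / 4) (-d / 4) (by unfold tau; push_cast; ring)]
    unfold tau; push_cast; ring
  · rw [gal_eq (b / 2 - d / 4) (d / 4) (by unfold tau; push_cast; ring)]
    unfold tau; push_cast; ring

lemma mem_L_of_twist {x : HR} (hx : inIcosian x) (h : twist x = x) : x ∈ Lsub := by
  obtain ⟨a, b, c, d, ⟨a₀, a₁, rfl⟩, ⟨b₀, b₁, rfl⟩, ⟨c₀, c₁, rfl⟩, ⟨d₀, d₁, rfl⟩, rfl⟩ := hx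
  have t := tau_sq
  have e1 := congrArg QuaternionAlgebra.re h
  have e2 := congrArg QuaternionAlgebra.imI h
  have e3 := congrArg QuaternionAlgebra.imJ h
  simp only [twist_comp, v₁_comp, v₂_comp, v₃_comp, v₄_comp, Quaternion.re_add,
    Quaternion.imI_add, Quaternion.imJ_add, Quaternion.imK_add, Quaternion.re_smul,
    Quaternion.imI_smul, Quaternion.imJ_smul, Quaternion.imK_smul, smul_eq_mul] at e1 e2 e3
  -- the components in the form `q + rτ` with `q, r ∈ ℚ`
  have r1 : ((a₀ : ℝ) + a₁ * tau) * 1 + (b₀ + b₁ * tau) * 0 + (c₀ + c₁ * tau) * (1 / 2) +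
      (d₀ + d₁ * tau) * ((1 - tau) / 2) = ((a₀ + c₀ / 2 + (d₀ - d₁) / 2 : ℚ) : ℝ) +
      ((a₁ + c₁ / 2 - d₀ / 2 : ℚ) : ℝ) * tau := by
    push_cast; linear_combination -(d₁ : ℝ) / 2 * t
  have r2 : ((a₀ : ℝ) + a₁ * tau) * 0 + (b₀ + b₁ * tau) * 1 + (c₀ + c₁ * tau) * (1 / 2) +
      (d₀ + d₁ * tau) * (tau / 2) = ((b₀ + c₀ / 2 + d₁ / 2 : ℚ) : ℝ) +
      ((b₁ + c₁ / 2 + (d₀ + d₁) / 2 : ℚ) : ℝ) * tau := by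
    push_cast; linear_combination (d₁ : ℝ) / 2 * t
  have r3 : ((a₀ : ℝ) + a₁ * tau) * 0 + (b₀ + b₁ * tau) * 0 + (c₀ + c₁ * tau) * (1 / 2) +
      (d₀ + d₁ * tau) * 0 = ((c₀ / 2 : ℚ) : ℝ) + ((c₁ / 2 : ℚ) : ℝ) * tau := by
    push_cast; ring
  have r4 : ((a₀ : ℝ) + a₁ * tau) * 0 + (b₀ + b₁ * tau) * 0 + (c₀ + c₁ * tau) * (1 / 2) +
      (d₀ + d₁ * tau) * (1 / 2) = (((c₀ + d₀) / 2 : ℚ) : ℝ) +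
      (((c₁ + d₁) / 2 : ℚ) : ℝ) * tau := by
    push_cast; ring
  have gal' : ∀ q r : ℚ, (q : ℝ) + r * (1 - tau) = ((q + r : ℚ) : ℝ) + ((-r : ℚ) : ℝ) * tau := by
    intro q r; push_cast; ring
  rw [r1, gal_tau_rep, gal'] at e1
  rw [r2, gal_tau_rep, gal'] at e2
  rw [r3, r4, gal_tau_rep, gal'] at e3
  obtain ⟨-, f1⟩ := tau_rep_unique e1
  obtain ⟨-, f2⟩ := tau_rep_unique e2
  obtain ⟨f3, f4⟩ := tau_rep_unique e3
  have g1 : d₁ = -2 * c₁ := by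
    have : (d₁ : ℚ) = -2 * c₁ := by linarith
    exact_mod_cast this
  have g0 : d₀ = c₁ := by
    have : (d₀ : ℚ) = c₁ := by subst g1; push_cast at *; linarith
    exact_mod_cast this
  subst g1 g0
  have g2 : a₁ = 0 := by
    have : (a₁ : ℚ) = 0 := by push_cast at *; linarith
    exact_mod_cast this
  have g3 : b₁ = 0 := by
    have : (b₁ : ℚ) = 0 := by push_cast at *; linarith
    exact_mod_cast this
  subst g2 g3
  refine mem_L_iff.mpr ⟨a₀ + c₀ + 2 * d₀, c₀ + d₀, 2 * d₀ - b₀, d₀, ?_⟩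
  rw [L_coords]
  push_cast
  module

/-! ### Trace duality -/

/-- Conjugate of the vector dual to `v₁` under the reduced trace form. -/
def u₁ : HR := ⟨1/2, 0, tau/2, (1 - tau)/2⟩

/-- Conjugate of the vector dual to `v₂` under the reduced trace form. -/
def u₂ : HR := ⟨0, -(1/2), (1 - tau)/2, tau/2⟩

/-- Conjugate of the vector dual to `v₃` under the reduced trace form. -/
def u₃ : HR := ⟨0, 0, -1, 0⟩

/-- Conjugate of the vector dual to `v₄` under the reduced trace form. -/
def u₄ : HR := ⟨0, 0, 1, -1⟩

@[simp] lemma u₁_comp : u₁.re = 1 / 2 ∧ u₁.imI = 0 ∧ u₁.imJ = tau / 2 ∧ u₁.imK = (1 - tau) / 2 :=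
  ⟨rfl, rfl, rfl, rfl⟩

@[simp] lemma u₂_comp : u₂.re = 0 ∧ u₂.imI = -(1 / 2)
    ∧ u₂.imJ = (1 - tau) / 2 ∧ u₂.imK = tau / 2 :=
  ⟨rfl, rfl, rfl, rfl⟩

@[simp] lemma u₃_comp : u₃.re = 0 ∧ u₃.imI = 0 ∧ u₃.imJ = -1 ∧ u₃.imK = 0 :=
  ⟨rfl, rfl, rfl, rfl⟩

@[simp] lemma u₄_comp : u₄.re = 0 ∧ u₄.imI = 0 ∧ u₄.imJ = 1 ∧ u₄.imK = -1 :=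
  ⟨rfl, rfl, rfl, rfl⟩

lemma ico_u₁ : inIcosian u₁ := by
  apply ico_of (-1) 0 1 0 0 1 1 (-2) <;> simp <;> linarith [tau_sq]

lemma ico_u₂ : inIcosian u₂ := by
  apply ico_of 1 0 (-2) 0 1 (-1) (-1) 2 <;> simp <;> linarith [tau_sq]

lemma ico_u₃ : inIcosian u₃ := by
  apply ico_of 0 1 1 (-1) (-2) 0 2 0 <;> simp <;> linarith [tau_sq]

lemma ico_u₄ : inIcosian u₄ := by
  apply ico_of 1 (-2) (-1) 2 2 0 (-4) 0 <;> simp <;> linarith [tau_sq]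

/-- The Casimir identity `∑ᵢ vᵢ x uᵢ = tr x`. -/
lemma casimir (x : HR) :
    v₁ * x * u₁ + v₂ * x * u₂ + v₃ * x * u₃ + v₄ * x * u₄ = (2 * x.re) • (1 : HR) := by
  ext <;> simp <;> ring_nf

/-- If `β p x q ∈ 𝕀` for all `x ∈ 𝕀`, then `β tr (p y) q ∈ 𝕀` for all `y ∈ 𝕀`. -/
lemma ico_trace_smul {β : ℝ} {p q : HR} (H : ∀ x, inIcosian x → inIcosian (β • (p * x * q)))
    {y : HR} (hy : inIcosian y) : inIcosian ((β * (2 * (p * y).re)) • q) := by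
  have key : (β * (2 * (p * y).re)) • q =
      v₁ * (β • (p * (y * u₁) * q)) + v₂ * (β • (p * (y * u₂) * q)) +
      v₃ * (β • (p * (y * u₃) * q)) + v₄ * (β • (p * (y * u₄) * q)) := by
    have h := congrArg (fun z => β • (z * q)) (casimir (p * y))
    simp only [smul_mul_assoc, one_mul, smul_smul, add_mul, smul_add] at h
    rw [← h]
    simp only [mul_smul_comm, mul_assoc]
  rw [key]
  exact ico_add (ico_add (ico_add
    (ico_mul ico_v₁ (H _ (ico_mul hy ico_u₁))) (ico_mul ico_v₂ (H _ (ico_mul hy ico_u₂))))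
    (ico_mul ico_v₃ (H _ (ico_mul hy ico_u₃)))) (ico_mul ico_v₄ (H _ (ico_mul hy ico_u₄)))

/-- Primitivity of `p` applied on both sides of `x`: a scalar `β ∈ K` with `β p 𝕀 p̃ ⊆ 𝕀` is
integral. -/
lemma inO_of_sandwich {p : HR} (hprim : IPrimitive p) {β : ℝ} (hβ : inK β)
    (H : ∀ x, inIcosian x → inIcosian (β • (p * x * twist p))) : inO β := by
  obtain ⟨hp, hmin⟩ := hprim
  have hpK := inHK_of_ico hp
  have tr_mem : ∀ y, inIcosian y → inK (2 * (p * y).re) → inO (β * (2 * (p * y).re)) := by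
    intro y hy hK
    have h1 := ico_twist (ico_trace_smul H hy)
    have hc := inK_mul hβ hK
    rw [twist_smul hc (inHK_twist hpK), twist_twist hpK] at h1
    have h2 := inO_gal (hmin _ (inK_gal hc) h1)
    rwa [gal_gal hc] at h2
  apply hmin β hβ
  obtain ⟨a, b, c, d, ha, hb, hc, hd, rfl⟩ := hp
  have h := tau_sq
  set p := a • v₁ + b • v₂ + c • v₃ + d • v₄ with hpdef
  have c1 : 2 * (p * u₁).re = a := by
    simp [hpdef]; ring
  have c2 : 2 * (p * u₂).re = b := by
    simp [hpdef]; ring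
  have c3 : 2 * (p * u₃).re = c := by
    simp [hpdef]; ring
  have c4 : 2 * (p * u₄).re = d := by
    simp [hpdef]; ring
  have k1 := tr_mem u₁ ico_u₁ (c1 ▸ inK_of_inO ha)
  have k2 := tr_mem u₂ ico_u₂ (c2 ▸ inK_of_inO hb)
  have k3 := tr_mem u₃ ico_u₃ (c3 ▸ inK_of_inO hc)
  have k4 := tr_mem u₄ ico_u₄ (c4 ▸ inK_of_inO hd)
  rw [c1] at k1
  rw [c2] at k2
  rw [c3] at k3
  rw [c4] at k4
  exact ⟨_, _, _, _, k1, k2, k3, k4, by rw [hpdef]; simp only [smul_add, smul_smul]⟩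

/-! ### From `L` to `𝕀` -/

lemma w₁_mem : w₁ ∈ Lsub := mem_L_iff.mpr ⟨1, 0, 0, 0, by simp⟩

lemma w₂_mem : w₂ ∈ Lsub := mem_L_iff.mpr ⟨0, 1, 0, 0, by simp⟩

lemma w₃_mem : w₃ ∈ Lsub := mem_L_iff.mpr ⟨0, 0, 1, 0, by simp⟩

lemma w₄_mem : w₄ ∈ Lsub := mem_L_iff.mpr ⟨0, 0, 0, 1, by simp⟩

lemma inO_sqrt : inO (Real.sqrt 5) := ⟨-1, 2, by unfold tau; push_cast; ring⟩

lemma sqrt_eq : Real.sqrt 5 = 2 * tau - 1 := by unfold tau; ring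

/-- `√5 𝕀` lies in the `𝔬`-span of `L`. -/
lemma sqrt_smul_coords (a b c d : ℝ) :
    Real.sqrt 5 • (a • v₁ + b • v₂ + c • v₃ + d • v₄) =
    (Real.sqrt 5 * (a + c) + d * (tau - 1) - d) • w₁ + (Real.sqrt 5 * c + d * (tau - 1)) • w₂ +
    (-Real.sqrt 5 * b - 2 * d) • w₃ + (-d) • w₄ := by
  have h := tau_sq
  rw [sqrt_eq]
  ext <;> simp
  · linear_combination -d * h
  · linear_combination d * h
  · ring
  · ring

lemma inO_sub {x y : ℝ} (hx : inO x) (hy : inO y) : inO (x - y) := by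
  rw [sub_eq_add_neg]; exact inO_add hx (inO_neg hy)

lemma int_of_sqrt_mul {α : ℚ} (h : inO (Real.sqrt 5 * α)) : ∃ n : ℤ, α = (n : ℚ) := by
  obtain ⟨m, n, h⟩ := h
  have h' : ((0 : ℚ) : ℝ) + (α : ℝ) * Real.sqrt 5 =
      ((m + n / 2 : ℚ) : ℝ) + ((n / 2 : ℚ) : ℝ) * Real.sqrt 5 := by
    rw [tau] at h
    push_cast
    linear_combination h
  obtain ⟨h1, h2⟩ := rep_unique h'
  exact ⟨-m, by push_cast; linarith⟩


/-- if `p ∈ 𝕀` is nonzero and `𝕀`-primitive, then `p L p̃` is an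
`L`-primitive sublattice of `L`: `p L p̃ ⊆ L` and every `α ∈ ℚ` with
`α · (p L p̃) ⊆ L` is an integer. -/
theorem primitive_icosian_gives_Lprimitive_ssl (p : HR) (hp : p ≠ 0)
    (hprim : IPrimitive p) :
    (∀ x ∈ Lsub, p * x * twist p ∈ Lsub) ∧
    (∀ α : ℚ, (∀ x ∈ Lsub, (α : ℝ) • (p * x * twist p) ∈ Lsub) →
      ∃ n : ℤ, α = (n : ℚ)) := by
  have hpI := hprim.1
  have hpK := inHK_of_ico hpI
  refine ⟨fun x hx => ?_, fun α hα => ?_⟩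
  · have hxI := ico_of_mem_L hx
    have hxK := inHK_of_ico hxI
    refine mem_L_of_twist (ico_mul (ico_mul hpI hxI) (ico_twist hpI)) ?_
    rw [twist_mul (inHK_mul hpK hxK) (inHK_twist hpK), twist_mul hpK hxK, twist_twist hpK,
      twist_of_mem_L hx, mul_assoc]
  · apply int_of_sqrt_mul
    apply inO_of_sandwich hprim (inK_mul inK_sqrt (inK_rat α))
    rintro x ⟨a, b, c, d, ha, hb, hc, hd, rfl⟩
    have t1 : inO (tau - 1) := inO_sub inO_tau (by simpa using inO_int 1)
    have t2 : inO (2 : ℝ) := by simpa using inO_int 2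
    have key : ∀ s : ℝ, inO s → ∀ w ∈ Lsub, inIcosian ((α : ℝ) • (p * (s • w) * twist p)) := by
      intro s hs w hw
      have := ico_smul hs (ico_of_mem_L (hα w hw))
      rwa [smul_comm, ← smul_mul_assoc s, ← mul_smul_comm s] at this
    have e : (Real.sqrt 5 * (α : ℝ)) • (p * (a • v₁ + b • v₂ + c • v₃ + d • v₄) * twist p) =
        (α : ℝ) • (p * (Real.sqrt 5 • (a • v₁ + b • v₂ + c • v₃ + d • v₄)) * twist p) := by
      rw [mul_smul_comm, smul_mul_assoc, smul_smul, mul_comm]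
    rw [e, sqrt_smul_coords]
    simp only [mul_add, add_mul, smul_add]
    have s5 := inO_sqrt
    refine ico_add (ico_add (ico_add (key _ ?_ _ w₁_mem) (key _ ?_ _ w₂_mem))
      (key _ ?_ _ w₃_mem)) (key _ ?_ _ w₄_mem)
    · simpa only [mul_add] using inO_sub (inO_add (inO_mul s5 (inO_add ha hc)) (inO_mul hd t1)) hd
    · exact inO_add (inO_mul s5 hc) (inO_mul hd t1)
    · exact inO_sub (inO_mul (inO_neg s5) hb) (inO_mul t2 hd)
    · exact inO_neg hd
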